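/- arXiv:1606.03617 — 2 statements merged into one kernel-verified Lean document; each statement's English description precedes it below -/
import Mathlib

section
/- Let R be an integral domain of characteristic zero containing an element i with i² = −1. Then the set { Y(1) : Y ∈ R[t, t⁻¹] and there exists X ∈ R[t, t⁻¹] with X² − (t² − 1)·Y² = 1 }, where Y(1) denotes evaluation of the Laurent polynomial Y at t = 1, is exactly the set ℤ + iℤ = { a·1_R + b·i : a, b ∈ ℤ } of Gaussian integers in R. -/
/-- Evaluation of a Laurent polynomial at `t = 1`: the ring homomorphism
`R[t,t⁻¹] → R` sending every power of `t` to `1`. -/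
noncomputable def LaurentPolynomial.evalAtOne (R : Type*) [CommRing R] :
    LaurentPolynomial R →+* R :=
  AddMonoidAlgebra.liftNCRingHom (RingHom.id R) (1 : Multiplicative ℤ →* R)
    (fun _ _ => Commute.all _ _)

namespace PellAux

open Polynomial

/-- The Gaussian integers in `R`. -/
def Gauss {R : Type*} [CommRing R] (i : R) (r : R) : Prop :=
  ∃ a b : ℤ, r = (a : R) + (b : R) * i

lemma Gauss.add {R : Type*} [CommRing R] {i r s : R} (h : Gauss i r) (h' : Gauss i s) :
    Gauss i (r + s) := by
  obtain ⟨a, b, rfl⟩ := h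
  obtain ⟨c, d, rfl⟩ := h'
  exact ⟨a + c, b + d, by push_cast; ring⟩

lemma Gauss.neg {R : Type*} [CommRing R] {i r : R} (h : Gauss i r) : Gauss i (-r) := by
  obtain ⟨a, b, rfl⟩ := h
  exact ⟨-a, -b, by push_cast; ring⟩

lemma Gauss.zero {R : Type*} [CommRing R] {i : R} : Gauss i 0 := ⟨0, 0, by simp⟩
lemma Gauss.one {R : Type*} [CommRing R] {i : R} : Gauss i 1 := ⟨1, 0, by simp⟩
lemma Gauss.I {R : Type*} [CommRing R] {i : R} : Gauss i i := ⟨0, 1, by simp⟩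

set_option linter.unusedSectionVars false
variable {R : Type*} [CommRing R] [IsDomain R] [CharZero R]

lemma eval_P {P Q : R[X]} {N : ℕ} (h : P ^ 2 - (X ^ 2 - 1) * Q ^ 2 = X ^ (2 * N)) :
    P.eval 1 = 1 ∨ P.eval 1 = -1 := by
  have := congrArg (Polynomial.eval 1) h
  simp at this
  exact this

/-- one-sided degree estimate -/
lemma deg_aux {A B Q : R[X]} (hAB : A * B = 1 - Q ^ 2) (hA : Q.natDegree + 1 ≤ A.natDegree) :
    B = 0 ∨ B.natDegree < Q.natDegree := by
  by_cases hB : B = 0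
  · exact Or.inl hB
  right
  have hA0 : A ≠ 0 := by rintro rfl; simp at hA
  have h1 := natDegree_mul hA0 hB
  have h2 : (1 - Q ^ 2 : R[X]).natDegree ≤ 2 * Q.natDegree := by
    refine (natDegree_sub_le _ _).trans ?_
    simp
  rw [hAB] at h1
  omega

lemma base (i : R) : ∀ (n : ℕ) (P Q : R[X]), Q.natDegree < n →
    P ^ 2 - (X ^ 2 - 1) * Q ^ 2 = 1 → Gauss i (Q.eval 1) := by
  intro n
  induction n with
  | zero => intro P Q h; omega
  | succ n ih =>
    intro P Q hn h
    by_cases hQ : Q = 0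
    · subst hQ; simpa using Gauss.zero
    have hP : P.eval 1 = 1 ∨ P.eval 1 = -1 := eval_P (N := 0) (by simpa using h)
    have hPG : Gauss i (P.eval 1) := by
      rcases hP with e | e <;> rw [e]
      exacts [Gauss.one, Gauss.one.neg]
    have hprod : (P - X * Q) * (P + X * Q) = 1 - Q ^ 2 := by linear_combination h
    have hdeg : (C (2:R) * (X * Q)).natDegree = Q.natDegree + 1 := by
      rw [natDegree_C_mul two_ne_zero, natDegree_X_mul hQ]
    have hdiff : (P + X * Q) - (P - X * Q) = C (2:R) * (X * Q) := by
      rw [show (C (2:R)) = 2 from rfl]; ring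
    have hmax := natDegree_sub_le (P + X * Q) (P - X * Q)
    rw [hdiff, hdeg] at hmax
    rcases le_max_iff.1 hmax with hm | hm
    · have hlow := deg_aux (by rw [mul_comm]; exact hprod) hm
      have hG : Gauss i ((P - X * Q).eval 1) := by
        rcases hlow with h0 | h0
        · rw [h0]; simpa using Gauss.zero
        · refine ih (X * P - (X ^ 2 - 1) * Q) (P - X * Q) (by omega) ?_
          linear_combination h
      have := hPG.add hG.neg
      simpa using this
    · have hlow := deg_aux hprod hm
      have hG : Gauss i ((P + X * Q).eval 1) := by
        rcases hlow with h0 | h0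
        · rw [h0]; simpa using Gauss.zero
        · refine ih (X * P + (X ^ 2 - 1) * Q) (P + X * Q) (by omega) ?_
          linear_combination h
      have := hG.add hPG.neg
      simpa using this

lemma main (i : R) (hi : i ^ 2 = -1) : ∀ (N : ℕ) (P Q : R[X]),
    P ^ 2 - (X ^ 2 - 1) * Q ^ 2 = X ^ (2 * N) → Gauss i (Q.eval 1) := by
  intro N
  induction N with
  | zero => intro P Q h; exact base i _ P Q (Nat.lt_succ_self _) (by simpa using h)
  | succ N ih =>
    intro P Q h
    have hX2 : (X ^ 2 : R[X]) ≠ 0 := pow_ne_zero _ X_ne_zero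
    have step : ∀ e : R, e ^ 2 = -1 → Gauss i e → (X : R[X]) ^ 2 ∣ P - C e * Q →
        Gauss i (Q.eval 1) := by
      intro e he hGe ⟨G, hG⟩
      have heC : (C e : R[X]) ^ 2 = -1 := by rw [← C_pow, he]; simp
      have hP : P = X ^ 2 * G + C e * Q := by linear_combination hG
      have hnew : (G + C e * Q) ^ 2 - (X ^ 2 - 1) * (C e * G) ^ 2 = X ^ (2 * N) := by
        apply mul_left_cancel₀ hX2
        rw [show (X : R[X]) ^ 2 * X ^ (2 * N) = X ^ (2 * (N + 1)) by ring, ← h, hP]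
        linear_combination (X ^ 2 * Q ^ 2 - X ^ 2 * (X ^ 2 - 1) * G ^ 2 - Q ^ 2) * heC
      have h1 := ih _ _ hnew
      have h2 : Gauss i (e * (G + C e * Q).eval 1) := by
        rcases eval_P hnew with e' | e' <;> rw [e']
        · simpa using hGe
        · simpa using hGe.neg
      have h3 := h1.add h2.neg
      have : Q.eval 1 = (C e * G).eval 1 + -(e * (G + C e * Q).eval 1) := by
        simp only [eval_mul, eval_add, eval_C]
        linear_combination (eval 1 Q) * he
      rw [this]; exact h3
    have hiC : (C i : R[X]) ^ 2 = -1 := by rw [← C_pow, hi]; simp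
    have hprod : (X : R[X]) ^ 2 ∣ (P - C i * Q) * (P - C (-i) * Q) := by
      refine ⟨X ^ (2 * N) + Q ^ 2, ?_⟩
      rw [C_neg]
      linear_combination h - Q ^ 2 * hiC
    by_cases h1 : (X : R[X]) ∣ P - C i * Q
    · by_cases h2 : (X : R[X]) ∣ P - C (-i) * Q
      · have hi0 : i ≠ 0 := by rintro rfl; simp at hi
        rw [X_dvd_iff] at h1 h2
        simp at h1 h2
        have hP0 : P.coeff 0 = 0 := by
          have : (2 : R) * P.coeff 0 = 0 := by linear_combination h1 + h2
          simpa using this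
        have hQ0 : Q.coeff 0 = 0 := by
          rw [hP0] at h2
          simpa [hi0] using h2
        obtain ⟨P', rfl⟩ := X_dvd_iff.2 hP0
        obtain ⟨Q', rfl⟩ := X_dvd_iff.2 hQ0
        have := ih P' Q' (by
          apply mul_left_cancel₀ hX2
          rw [show (X : R[X]) ^ 2 * X ^ (2 * N) = X ^ (2 * (N + 1)) by ring, ← h]
          ring)
        simpa using this
      · exact step i hi Gauss.I (prime_X.pow_dvd_of_dvd_mul_right 2 h2 hprod)
    · exact step (-i) (by simpa using hi) Gauss.I.neg
        (prime_X.pow_dvd_of_dvd_mul_left 2 h1 hprod)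

end PellAux

namespace PellAux
variable {R : Type*} [CommRing R]
open LaurentPolynomial

lemma ev_T (n : ℤ) : evalAtOne R (T n) = 1 := by
  refine (AddMonoidAlgebra.liftNC_single _ _ _ _).trans ?_
  simp

lemma ev_C (r : R) : evalAtOne R (C r) = r := by
  refine (AddMonoidAlgebra.liftNC_single _ _ _ _).trans ?_
  simp

lemma ev_poly (p : Polynomial R) : evalAtOne R (Polynomial.toLaurent p) = p.eval 1 := by
  induction p using Polynomial.induction_on' with
  | add p q hp hq => simp [hp, hq]
  | monomial n a =>
    rw [← Polynomial.C_mul_X_pow_eq_monomial, Polynomial.toLaurent_C_mul_X_pow, map_mul, ev_T, ev_C]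
    simp

/-- `r` is the value of a solution with `X(1) = 1`. -/
def Good (r : R) : Prop := ∃ Y X : LaurentPolynomial R,
  X ^ 2 - (T 1 ^ 2 - 1) * Y ^ 2 = 1 ∧ evalAtOne R X = 1 ∧ evalAtOne R Y = r

lemma Good.mul {r s : R} (h : Good r) (h' : Good s) : Good (r + s) := by
  obtain ⟨Y, X, h, hX, hY⟩ := h
  obtain ⟨V, U, h', hU, hV⟩ := h'
  refine ⟨X * V + Y * U, X * U + (T 1 ^ 2 - 1) * Y * V, ?_, ?_, ?_⟩
  · linear_combination (U ^ 2 - (T 1 ^ 2 - 1) * V ^ 2) * h + h'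
  · simp only [map_add, map_mul, map_sub, map_pow, map_one, ev_T, hX, hU]; ring
  · simp only [map_add, map_mul, hX, hU, hY, hV]; ring

lemma Good.neg {r : R} (h : Good r) : Good (-r) := by
  obtain ⟨Y, X, h, hX, hY⟩ := h
  exact ⟨-Y, X, by linear_combination h, hX, by rw [map_neg, hY]⟩

lemma Good.zero : Good (0 : R) := ⟨0, 1, by simp, by simp, by simp⟩
lemma Good.one : Good (1 : R) := ⟨1, T 1, by ring, ev_T 1, by simp⟩
lemma Good.I {i : R} (hi : i ^ 2 = -1) : Good i := by
  refine ⟨C i * T (-1), T (-1), ?_, ev_T _, by rw [map_mul, ev_T, ev_C, mul_one]⟩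
  have h1 : (C i : LaurentPolynomial R) ^ 2 = -1 := by rw [← map_pow, hi]; simp
  have h2 : (T 1 : LaurentPolynomial R) * T (-1) = 1 := by rw [← T_add]; simp
  linear_combination (-(T 1 ^ 2 - 1) * T (-1) ^ 2) * h1 + (T 1 * T (-1) + 1) * h2

lemma Good.zmul {r : R} (h : Good r) (a : ℤ) : Good ((a : R) * r) := by
  induction a using Int.induction_on with
  | zero => simpa using Good.zero
  | succ n ih => 
    have := ih.mul h
    push_cast at this ⊢
    rwa [add_mul, one_mul]
  | pred n ih =>
    have := ih.mul h.neg
    push_cast at this ⊢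
    rwa [sub_mul, one_mul, sub_eq_add_neg]

end PellAux

/-- Let `R` be an integral domain of characteristic zero containing an element
`i` with `i² = −1`. The set of values `Y(1)` of Laurent polynomials
`Y ∈ R[t,t⁻¹]` for which there exists `X ∈ R[t,t⁻¹]` with `X² − (t² − 1)·Y² = 1`
is exactly the set `ℤ + iℤ` of Gaussian integers in `R`. -/
theorem pell_values_at_one_laurent_ring_gaussian (R : Type*) [CommRing R] [IsDomain R]
    [CharZero R] (i : R) (hi : i ^ 2 = -1) :
    { r : R | ∃ Y X : LaurentPolynomial R,
        X ^ 2 - (LaurentPolynomial.T 1 ^ 2 - 1) * Y ^ 2 = 1 ∧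
        LaurentPolynomial.evalAtOne R Y = r } =
      { r : R | ∃ a b : ℤ, r = (a : R) + (b : R) * i } := by
  ext r
  constructor
  · rintro ⟨Y, X, h, rfl⟩
    obtain ⟨m, P, hP⟩ := X.exists_T_pow
    obtain ⟨n, Q, hQ⟩ := Y.exists_T_pow
    have key : (P * Polynomial.X ^ n) ^ 2 - (Polynomial.X ^ 2 - 1) * (Q * Polynomial.X ^ m) ^ 2
        = Polynomial.X ^ (2 * (m + n)) := by
      apply Polynomial.toLaurent_injective
      simp only [map_sub, map_mul, map_pow, map_one, hP, hQ, Polynomial.toLaurent_X]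
      have e : ∀ k : ℕ, (LaurentPolynomial.T (k : ℤ) : LaurentPolynomial R)
          = LaurentPolynomial.T 1 ^ k := by
        intro k; rw [LaurentPolynomial.T_pow]; simp
      rw [e, e]
      linear_combination (LaurentPolynomial.T 1 ^ m * LaurentPolynomial.T 1 ^ n) ^ 2 * h
    have := PellAux.main i hi _ _ _ key
    rw [← PellAux.ev_poly, map_mul, hQ] at this
    simpa [PellAux.ev_T, PellAux.Gauss] using this
  · rintro ⟨a, b, rfl⟩
    obtain ⟨Y, X, h, -, hY⟩ :=
      (PellAux.Good.one.zmul a).mul ((PellAux.Good.I hi).zmul b)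
    exact ⟨Y, X, h, by rw [hY, mul_one]⟩
end

section
/- Let K be a field and G a group, and suppose the group algebra K(G) has only trivial units, i.e. every invertible element of K(G) is of the form α·g with α ∈ K ∖ {0} and g ∈ G. Then for every x ∈ K(G), the element x lies in the image of K (the scalar multiples of 1) if and only if x = 0, or x = −1, or there exists y ∈ K(G) with x·(x + 1)·y = 1. In particular, K is a Diophantine subset of K(G). -/
theorem right_inv_left_inv_aux (K G : Type*) [Field K] [Group G]
    (htu : ∀ x : MonoidAlgebra K G, IsUnit x →
      ∃ (α : K) (g : G), α ≠ 0 ∧ x = MonoidAlgebra.single g α)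
    (a b : MonoidAlgebra K G) (hab : a * b = 1) : b * a = 1 := by
  classical
  obtain ⟨e, he⟩ : ∃ e, e = 1 - b * a := ⟨_, rfl⟩
  have hae : a * e = 0 := by
    rw [he, mul_sub, mul_one, ← mul_assoc, hab, one_mul, sub_self]
  suffices h0 : e = 0 by
    rw [h0] at he
    exact (sub_eq_zero.mp he.symm).symm
  -- the augmentation map
  let ε : MonoidAlgebra K G →ₐ[K] K := MonoidAlgebra.lift K K G 1
  have hεs : ∀ (g : G) (α : K), ε (MonoidAlgebra.single g α) = α := by
    intro g α
    simp [ε, MonoidAlgebra.lift_single]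
  have hεe : ε e = 0 := by
    have h1 : ε a * ε b = 1 := by rw [← map_mul, hab, map_one]
    rw [he, map_sub, map_one, map_mul, mul_comm, h1, sub_self]
  -- elements `1 + e * r * a` are units, hence group elements
  have key : ∀ r : MonoidAlgebra K G, (∃ s, r = s * a) →
      ∃ g : G, 1 + e * r = MonoidAlgebra.single g (1 : K) := by
    rintro r ⟨s, rfl⟩
    have hsq : (e * (s * a)) * (e * (s * a)) = 0 := by
      have : (e * (s * a)) * (e * (s * a)) = e * s * (a * e) * (s * a) := by
        simp only [mul_assoc]
      rw [this, hae]; simp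
    have hu : IsUnit (1 + e * (s * a)) := by
      refine ⟨⟨1 + e * (s * a), 1 - e * (s * a), ?_, ?_⟩, rfl⟩
      · rw [mul_sub, add_mul, add_mul, hsq]; simp
      · rw [sub_mul, mul_add, mul_add, hsq]; simp
    obtain ⟨α, g, -, h⟩ := htu _ hu
    refine ⟨g, ?_⟩
    have h2 := congrArg ε h
    rw [hεs, map_add, map_one, map_mul, hεe, zero_mul, add_zero] at h2
    rw [h, ← h2]
  obtain ⟨g, hg⟩ := key a ⟨1, by simp⟩
  obtain ⟨h, hh⟩ := key (a * a) ⟨a, rfl⟩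
  obtain ⟨k, hk⟩ := key (a + a * a) ⟨1 + a, by rw [add_mul, one_mul]⟩
  have c1 : e * a = 0 → e = 0 := by
    intro h
    rw [← mul_one e, ← hab, ← mul_assoc, h, zero_mul]
  have c2 : e * (a * a) = 0 → e = 0 := by
    intro h
    apply c1
    rw [← mul_one (e * a), ← hab, ← mul_assoc, mul_assoc e, h, zero_mul]
  have hone : (1 : MonoidAlgebra K G) = MonoidAlgebra.single 1 1 := rfl
  by_cases hg1 : g = 1
  · rw [hg1, ← hone] at hg
    exact c1 (by simpa using hg)
  by_cases hh1 : h = 1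
  · rw [hh1, ← hone] at hh
    exact c2 (by simpa using hh)
  have hsum : MonoidAlgebra.single g (1 : K) + MonoidAlgebra.single h 1
      = MonoidAlgebra.single 1 1 + MonoidAlgebra.single k 1 := by
    rw [← hg, ← hh, ← hk, ← hone, mul_add]; abel
  have hgh : g = h := by
    by_contra hne
    have e1 := congrArg (fun f => f.coeff 1) hsum
    have e2 := congrArg (fun f => f.coeff g) hsum
    simp [Finsupp.single_apply, hg1, hh1, Ne.symm hne, Ne.symm hg1] at e1 e2
    by_cases hk1 : k = 1
    · subst hk1
      simp [Ne.symm hg1] at e2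
    · simp [hk1] at e1
  have heq : e * a = e * (a * a) := by
    have := hg.trans (hgh ▸ hh.symm)
    exact add_left_cancel this
  have h3 : e = e * a := by
    have := congrArg (· * b) heq
    simpa [mul_assoc, hab] using this
  have h4 : e * (1 - b * a) = e := by
    have : e * b = 1 * b - b * (a * b) := by rw [he, sub_mul, mul_assoc]
    rw [hab, one_mul, mul_one, sub_self] at this
    rw [mul_sub, ← mul_assoc, this]; simp
  calc e = e * (1 - b * a) := h4.symm
    _ = e * a * e := by rw [← he, ← h3]
    _ = 0 := by rw [mul_assoc, hae, mul_zero]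



/-- Let `K` be a field and `G` a group such that the group algebra `K(G)` has
only trivial units. Then `x ∈ K(G)` is a scalar iff `x = 0`, or `x = −1`, or
`x·(x+1)·y = 1` for some `y`; in particular `K` is Diophantine in `K(G)`. -/
theorem scalars_diophantine_in_group_algebra (K G : Type*) [Field K] [Group G]
    (htu : ∀ x : MonoidAlgebra K G, IsUnit x →
      ∃ (α : K) (g : G), α ≠ 0 ∧ x = MonoidAlgebra.single g α)
    (x : MonoidAlgebra K G) :
    x ∈ Set.range (algebraMap K (MonoidAlgebra K G)) ↔
      x = 0 ∨ x = -1 ∨ ∃ y : MonoidAlgebra K G, x * (x + 1) * y = 1 := by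
  classical
  constructor
  · rintro ⟨c, rfl⟩
    by_cases h0 : c = 0
    · left; simp [h0]
    by_cases h1 : c = -1
    · right; left; rw [h1, map_neg, map_one]
    right; right
    have h2 : c + 1 ≠ 0 := fun h => h1 (eq_neg_of_add_eq_zero_left h)
    refine ⟨algebraMap K _ (c * (c + 1))⁻¹, ?_⟩
    rw [← map_one (algebraMap K (MonoidAlgebra K G)), ← map_add, ← map_mul, ← map_mul,
      mul_inv_cancel₀ (mul_ne_zero h0 h2)]
  · rintro (rfl | rfl | ⟨y, hy⟩)
    · exact ⟨0, map_zero _⟩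
    · exact ⟨-1, by rw [map_neg, map_one]⟩
    have hx : x * ((x + 1) * y) = 1 := by rw [← mul_assoc, hy]
    have hx1 : (x + 1) * (x * y) = 1 := by
      have hc : (x + 1) * x = x * (x + 1) := by rw [add_mul, mul_add, one_mul, mul_one]
      rw [← mul_assoc, hc, hy]
    have ux : IsUnit x := ⟨⟨x, _, hx, right_inv_left_inv_aux K G htu _ _ hx⟩, rfl⟩
    have ux1 : IsUnit (x + 1) := ⟨⟨x + 1, _, hx1, right_inv_left_inv_aux K G htu _ _ hx1⟩, rfl⟩
    obtain ⟨α, g, hα, rfl⟩ := htu _ ux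
    obtain ⟨β, h, hβ, e⟩ := htu _ ux1
    by_cases hg : g = 1
    · subst hg
      exact ⟨α, by simp [MonoidAlgebra.coe_algebraMap]⟩
    exfalso
    have hone : (1 : MonoidAlgebra K G) = MonoidAlgebra.single 1 1 := rfl
    rw [hone] at e
    have e1 := congrArg (fun f => f.coeff 1) e
    have e2 := congrArg (fun f => f.coeff g) e
    simp [Finsupp.single_apply, hg, Ne.symm hg] at e1 e2
    by_cases hh : h = 1
    · subst hh
      simp [Ne.symm hg, hα] at e2
    · simp [hh] at e1
end
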